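/- Let a be a real number with |a| < 1 and let f_a : ℝ → ℝ be defined by f_a(x) = 1/((1+(x−a)²)·(1+(x+a)²)). Then f_a has a strict global maximum at 0: for every real x ≠ 0, f_a(x) < f_a(0) = 1/(1+a²)². In particular f_a is unimodal. -/

import Mathlib

/-- For `|a| < 1`, the density `f_a(x) = 1/((1+(x-a)²)(1+(x+a)²))` has a strict global
maximum at `0`, with `f_a(0) = 1/(1+a²)²`: it is unimodal. -/
theorem cauchy_conditional_density_unimodal (a : ℝ) (ha : |a| < 1) (f : ℝ → ℝ)
    (hf : f = fun x : ℝ => 1 / ((1 + (x - a) ^ 2) * (1 + (x + a) ^ 2))) :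
    f 0 = 1 / (1 + a ^ 2) ^ 2 ∧ ∀ x : ℝ, x ≠ 0 → f x < f 0 := by
  subst hf
  have ha2 : a ^ 2 < 1 := (sq_lt_one_iff_abs_lt_one a).mpr ha
  have h0 : (1 + (0 - a) ^ 2) * (1 + (0 + a) ^ 2) = (1 + a ^ 2) ^ 2 := by ring
  refine ⟨by simp only [h0], fun x hx => ?_⟩
  simp only [h0]
  have hx2 : 0 < x ^ 2 := by positivity
  apply one_div_lt_one_div_of_lt (by positivity)
  have h1 : (1 + (x - a) ^ 2) * (1 + (x + a) ^ 2)
      = (1 + a ^ 2) ^ 2 + (x ^ 2 * x ^ 2 + 2 * (x ^ 2 * (1 - a ^ 2))) := by ring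
  have h2 : 0 < x ^ 2 * (1 - a ^ 2) := mul_pos hx2 (by linarith)
  have h3 : 0 < x ^ 2 * x ^ 2 := mul_pos hx2 hx2
  linarith
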